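/- arXiv:math/0204206 — 2 statements merged into one kernel-verified Lean document; each statement's English description precedes it below -/
import Mathlib

section
/- Let γ be a non-resonant Gelfand–Zetlin array. Then for every 1 ≤ n ≤ N−2 and every function f of the Gelfand–Zetlin variables, the Serre relations hold pointwise at γ: [E_{n,n+1},[E_{n,n+1},E_{n+1,n+2}]]f(γ) = 0, [E_{n+1,n+2},[E_{n,n+1},E_{n+1,n+2}]]f(γ) = 0, [E_{n+1,n},[E_{n+1,n},E_{n+2,n+1}]]f(γ) = 0, and [E_{n+2,n+1},[E_{n+1,n},E_{n+2,n+1}]]f(γ) = 0, where [A,B]f denotes A(Bf) − B(Af). -/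
open Finset

noncomputable section

/-- A Gelfand–Zetlin array: complex values `γ n j`, relevant for `1 ≤ j ≤ n ≤ N`. -/
abbrev GZ := ℕ → ℕ → ℂ

/-- Shift of the single variable `γ n j` by `c`. -/
def gzShift (c : ℂ) (n j : ℕ) (γ : GZ) : GZ :=
  fun a b => if a = n ∧ b = j then γ a b + c else γ a b

/-- The raising Gelfand–Zetlin operator `E_{n,n+1}`. -/
def Eraise (ℏ : ℝ) (n : ℕ) (f : GZ → ℂ) : GZ → ℂ := fun γ =>
  -(1 / (Complex.I * ℏ)) * ∑ j ∈ Icc 1 n,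
    ((∏ r ∈ Icc 1 (n + 1), (γ n j - γ (n + 1) r - Complex.I * ℏ / 2)) /
      ∏ s ∈ (Icc 1 n).erase j, (γ n j - γ n s)) * f (gzShift (-(Complex.I * ℏ)) n j γ)

/-- The lowering Gelfand–Zetlin operator `E_{n+1,n}`. -/
def Elower (ℏ : ℝ) (n : ℕ) (f : GZ → ℂ) : GZ → ℂ := fun γ =>
  (1 / (Complex.I * ℏ)) * ∑ j ∈ Icc 1 n,
    ((∏ r ∈ Icc 1 (n - 1), (γ n j - γ (n - 1) r + Complex.I * ℏ / 2)) /
      ∏ s ∈ (Icc 1 n).erase j, (γ n j - γ n s)) * f (gzShift (Complex.I * ℏ) n j γ)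

/-- Commutator of two operators on functions of the Gelfand–Zetlin variables. -/
def gzComm (A B : (GZ → ℂ) → (GZ → ℂ)) (f : GZ → ℂ) : GZ → ℂ :=
  fun γ => A (B f) γ - B (A f) γ

/-- Non-resonance: no two same-level entries differ by an integer multiple of `iℏ`. -/
def NonResonant (ℏ : ℝ) (N : ℕ) (γ : GZ) : Prop :=
  ∀ n ∈ Icc 1 (N - 1), ∀ j s : ℕ, 1 ≤ j → j < s → s ≤ n →
    ∀ m : ℤ, (γ n j - γ n s) / (Complex.I * ℏ) ≠ (m : ℂ)

/-!
Both kinds of generators are weighted shift operators with the same weights: with `c = -iℏ` for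
raising and `c = iℏ` for lowering, row `m` interacts with its neighbouring row `m'` through the
factors `γ m j - γ m' r + c / 2`. Expanding `[A, [A, B]]` into a triple sum over two shifts `j`, `l`
of `A` and one shift `k` of `B`, the interaction factors between the two rows contribute
`c * (γ m j - γ m l + c)` times the product of the remaining weights when `j ≠ l`, and cancel
when `j = l`. By an exchange relation of the weights of a single row, that product is antisymmetric
under `j ↔ l`, so the sum vanishes.
-/

lemma sum_sum_eq_zero_of_alternating {ι M : Type*} [AddCommMonoid M] {J : Finset ι}
    {F : ι → ι → M} (hdiag : ∀ j ∈ J, F j j = 0)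
    (hswap : ∀ j ∈ J, ∀ l ∈ J, j ≠ l → F j l + F l j = 0) :
    ∑ j ∈ J, ∑ l ∈ J, F j l = 0 := by
  rw [← sum_product']
  refine sum_involution (fun p _ => p.swap) ?_ ?_ ?_ fun p _ => p.swap_swap
  · rintro ⟨j, l⟩ hp
    obtain ⟨hj, hl⟩ := mem_product.1 hp
    rcases eq_or_ne j l with rfl | hjl
    · simp only [Prod.swap, hdiag j hj, add_zero]
    · exact hswap j hj l hl hjl
  · rintro ⟨j, l⟩ hp hne hfix
    obtain rfl : l = j := congrArg Prod.fst hfix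
    exact hne (hdiag l (mem_product.1 hp).1)
  · exact fun p hp => mem_product.2 (mem_product.1 hp).symm

lemma lie_lie_skew {A : Type*} [Ring A] (x y : A) : ⁅y, ⁅x, y⁆⁆ = -⁅y, ⁅y, x⁆⁆ := by
  simp only [Ring.lie_def]
  noncomm_ring

section WeightedShift

variable {X ι κ R : Type*} [CommRing R]

/-- The difference operator `f ↦ ∑ j ∈ J, a j • (f ∘ σ j)` on `R`-valued functions, with weights
`a j` and shifts `σ j`. -/
def weightedShift (J : Finset ι) (a : ι → X → R) (σ : ι → X → X) : Module.End R (X → R) where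
  toFun f x := ∑ j ∈ J, a j x * f (σ j x)
  map_add' f g := by
    funext x
    simp only [Pi.add_apply, mul_add, sum_add_distrib]
  map_smul' r f := by
    funext x
    simp only [Pi.smul_apply, smul_eq_mul, RingHom.id_apply, mul_sum, mul_left_comm]

lemma weightedShift_apply (J : Finset ι) (a : ι → X → R) (σ : ι → X → X) (f : X → R) (x : X) :
    weightedShift J a σ f x = ∑ j ∈ J, a j x * f (σ j x) := rfl

/-- The coefficient of the shift `τ k ∘ σ l ∘ σ j` in the double commutator `[A, [A, B]]` of the
weighted shift operators `A = ∑ j, a j • σ j` and `B = ∑ k, b k • τ k`, when the shifts `σ j`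
commute with the `τ k`. -/
def serreCoeff (a : ι → X → R) (σ : ι → X → X) (b : κ → X → R) (τ : κ → X → X)
    (k : κ) (x : X) (j l : ι) : R :=
  a j x * a l (σ j x) * b k (σ l (σ j x))
    - 2 * (a j x * b k (σ j x) * a l (τ k (σ j x)))
    + b k x * a j (τ k x) * a l (σ j (τ k x))

variable {J : Finset ι} {K : Finset κ} {a : ι → X → R} {b : κ → X → R}
  {σ : ι → X → X} {τ : κ → X → X}

lemma lie_lie_weightedShift_apply (hστ : ∀ j k, Function.Commute (σ j) (τ k))
    (f : X → R) (x : X) :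
    ⁅weightedShift J a σ, ⁅weightedShift J a σ, weightedShift K b τ⁆⁆ f x =
      ∑ j ∈ J, ∑ l ∈ J, ∑ k ∈ K, serreCoeff a σ b τ k x j l * f (τ k (σ l (σ j x))) := by
  set A := weightedShift J a σ with hA
  set B := weightedShift K b τ with hB
  have expand : ⁅A, ⁅A, B⁆⁆ f x = A (A (B f)) x - 2 * A (B (A f)) x + B (A (A f)) x := by
    simp only [Ring.lie_def, mul_sub, sub_mul, LinearMap.sub_apply,
      Module.End.mul_apply, Pi.sub_apply]
    ring
  have hAAB : A (A (B f)) x = ∑ j ∈ J, ∑ l ∈ J, ∑ k ∈ K,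
      a j x * a l (σ j x) * b k (σ l (σ j x)) * f (τ k (σ l (σ j x))) := by
    simp only [hA, hB, weightedShift_apply, mul_sum, mul_assoc]
  have hABA : A (B (A f)) x = ∑ j ∈ J, ∑ l ∈ J, ∑ k ∈ K,
      a j x * b k (σ j x) * a l (τ k (σ j x)) * f (τ k (σ l (σ j x))) := by
    simp only [hA, hB, weightedShift_apply, mul_sum, mul_assoc, (hστ _ _).eq]
    exact sum_congr rfl fun j _ => sum_comm
  have hBAA : B (A (A f)) x = ∑ j ∈ J, ∑ l ∈ J, ∑ k ∈ K,
      b k x * a j (τ k x) * a l (σ j (τ k x)) * f (τ k (σ l (σ j x))) := by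
    simp only [hA, hB, weightedShift_apply, mul_sum, mul_assoc, (hστ _ _).eq]
    rw [sum_comm]
    exact sum_congr rfl fun j _ => sum_comm
  rw [expand, hAAB, hABA, hBAA]
  simp only [serreCoeff, add_mul, sub_mul, mul_assoc, mul_sum, sum_add_distrib, sum_sub_distrib]

lemma lie_lie_weightedShift_apply_eq_zero (hσ : ∀ j l, Function.Commute (σ j) (σ l))
    (hστ : ∀ j k, Function.Commute (σ j) (τ k)) {x : X}
    (hdiag : ∀ k ∈ K, ∀ j ∈ J, serreCoeff a σ b τ k x j j = 0)
    (hswap : ∀ k ∈ K, ∀ j ∈ J, ∀ l ∈ J, j ≠ l →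
      serreCoeff a σ b τ k x j l + serreCoeff a σ b τ k x l j = 0)
    (f : X → R) :
    ⁅weightedShift J a σ, ⁅weightedShift J a σ, weightedShift K b τ⁆⁆ f x = 0 := by
  rw [lie_lie_weightedShift_apply hστ]
  refine sum_sum_eq_zero_of_alternating (fun j hj => ?_) fun j hj l hl hjl => ?_
  · exact sum_eq_zero fun k hk => by rw [hdiag k hk j hj, zero_mul]
  · rw [← sum_add_distrib]
    refine sum_eq_zero fun k hk => ?_
    rw [(hσ l j).eq, ← add_mul, hswap k hk j hj l hl hjl, zero_mul]

end WeightedShift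

section GelfandZetlinOperator

lemma gzShift_commute (c d : ℂ) (m j m' k : ℕ) :
    Function.Commute (gzShift c m j) (gzShift d m' k) := by
  intro γ
  funext a b
  simp only [gzShift]
  split_ifs <;> ring

/-- The weight of the shift of `γ m j` by `c` in the Gelfand–Zetlin operator of row `m`, with
entries indexed by `J`, whose neighbouring row is row `m'`, with entries indexed by `K`. The raising
operators have `c = -iℏ` and `m' = m + 1`, the lowering operators `c = iℏ` and `m' = m - 1`. -/
def gzWeight (c : ℂ) (m m' : ℕ) (J K : Finset ℕ) (j : ℕ) (γ : GZ) : ℂ :=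
  c⁻¹ * ((∏ r ∈ K, (γ m j - γ m' r + c / 2)) / ∏ s ∈ J.erase j, (γ m j - γ m s))

/-- The Gelfand–Zetlin operator with weights `gzWeight`, raising or lowering according to `c`
and `m'`. -/
def gzOperator (c : ℂ) (m m' : ℕ) (J K : Finset ℕ) : Module.End ℂ (GZ → ℂ) :=
  weightedShift J (gzWeight c m m' J K) (gzShift c m)

lemma Eraise_eq_gzOperator (ℏ : ℝ) (n : ℕ) :
    Eraise ℏ n = gzOperator (-(Complex.I * ℏ)) n (n + 1) (Icc 1 n) (Icc 1 (n + 1)) := by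
  funext f γ
  simp only [Eraise, gzOperator, weightedShift_apply, gzWeight, mul_sum, mul_assoc, one_div,
    inv_neg, neg_div, sub_eq_add_neg]

lemma Elower_eq_gzOperator (ℏ : ℝ) (n : ℕ) :
    Elower ℏ n = gzOperator (Complex.I * ℏ) n (n - 1) (Icc 1 n) (Icc 1 (n - 1)) := by
  funext f γ
  simp only [Elower, gzOperator, weightedShift_apply, gzWeight, mul_sum, mul_assoc, one_div]

lemma gzComm_coe (A B : Module.End ℂ (GZ → ℂ)) : gzComm A B = ⇑⁅A, B⁆ := rfl

variable {c d : ℂ} {m m' m'' : ℕ} {J J' J'' K : Finset ℕ} {j l k : ℕ} {γ : GZ}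

lemma gzWeight_eq_mul_erase (hk : k ∈ K) (j : ℕ) (γ : GZ) :
    gzWeight c m m' J K j γ =
      (γ m j - γ m' k + c / 2) * gzWeight c m m' J (K.erase k) j γ := by
  rw [gzWeight, gzWeight, ← mul_prod_erase K _ hk]
  ring

lemma gzWeight_eq_erase_div (hl : l ∈ J) (hlj : l ≠ j) (γ : GZ) :
    gzWeight c m m' J K j γ = gzWeight c m m' (J.erase l) K j γ / (γ m j - γ m l) := by
  rw [gzWeight, gzWeight, ← mul_prod_erase (J.erase j) _ (mem_erase.2 ⟨hlj, hl⟩),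
    erase_right_comm, mul_div_assoc, div_div, mul_comm (γ m j - γ m l)]

lemma gzWeight_gzShift_of_notMem (hm : m ≠ m') (hl : l ∉ J) (hlj : l ≠ j) (γ : GZ) :
    gzWeight c m m' J K j (gzShift d m l γ) = gzWeight c m m' J K j γ := by
  have entry_eq : ∀ s, s ≠ l → gzShift d m l γ m s = γ m s := fun s hs =>
    if_neg fun h => hs h.2
  have neighbour_eq : ∀ r, gzShift d m l γ m' r = γ m' r := fun r => if_neg fun h => hm h.1.symm
  simp only [gzWeight, entry_eq j hlj.symm, neighbour_eq]
  congr 2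
  exact prod_congr rfl fun s hs => by
    rw [entry_eq s (ne_of_mem_of_not_mem (mem_of_mem_erase hs) hl)]

lemma gzWeight_gzShift_neighbour_of_notMem (hm : m ≠ m') (hk : k ∉ K) (j : ℕ) (γ : GZ) :
    gzWeight c m m' J K j (gzShift d m' k γ) = gzWeight c m m' J K j γ := by
  have row_eq : ∀ s, gzShift d m' k γ m s = γ m s := fun s => if_neg fun h => hm h.1
  have neighbour_eq : ∀ r ∈ K, gzShift d m' k γ m' r = γ m' r := fun r hr =>
    if_neg fun h => ne_of_mem_of_not_mem hr hk h.2
  simp only [gzWeight, row_eq]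
  congr 2
  exact prod_congr rfl fun r hr => by rw [neighbour_eq r hr]

lemma gzWeight_gzShift_of_ne (hm : m ≠ m'') (hm' : m' ≠ m'') (j k : ℕ) (γ : GZ) :
    gzWeight c m m' J K j (gzShift d m'' k γ) = gzWeight c m m' J K j γ := by
  simp only [gzWeight, gzShift, hm, hm', false_and, if_false]

lemma mul_gzWeight_gzShift (hm : m ≠ m') (hj : j ∈ J) (hjl : j ≠ l) (hγ : γ m l - γ m j ≠ c) :
    (γ m j - γ m l + c) * gzWeight c m m' J K l (gzShift c m j γ) =
      -gzWeight c m m' (J.erase j) K l γ := by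
  have hdiff : γ m l - (γ m j + c) ≠ 0 := fun h => hγ (by linear_combination h)
  rw [gzWeight_eq_erase_div hj hjl, gzWeight_gzShift_of_notMem hm (notMem_erase j J) hjl]
  simp only [gzShift, hjl.symm, and_self, and_false, if_true, if_false]
  field_simp
  ring

lemma gzWeight_exchange (hm : m ≠ m') (hj : j ∈ J) (hl : l ∈ J) (hjl : j ≠ l)
    (hγ : (J : Set ℕ).Pairwise fun s t => γ m s - γ m t ≠ c) :
    (γ m j - γ m l + c) * (gzWeight c m m' J K j γ * gzWeight c m m' J K l (gzShift c m j γ)) +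
      (γ m l - γ m j + c) *
        (gzWeight c m m' J K l γ * gzWeight c m m' J K j (gzShift c m l γ)) = 0 := by
  rw [mul_left_comm, mul_gzWeight_gzShift hm hj hjl (hγ hl hj hjl.symm), mul_left_comm,
    mul_gzWeight_gzShift hm hl hjl.symm (hγ hj hl hjl), gzWeight_eq_erase_div hl hjl.symm,
    gzWeight_eq_erase_div hj hjl, ← neg_sub (γ m j), div_neg]
  ring

lemma serreCoeff_gzWeight_neighbour_self (hm : m ≠ m') (hm'' : m ≠ m'') (hk : k ∈ J') (j : ℕ)
    (γ : GZ) :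
    serreCoeff (gzWeight c m m' J J') (gzShift c m) (gzWeight c m' m'' J' J'') (gzShift c m')
      k γ j j = 0 := by
  simp only [serreCoeff, gzWeight_eq_mul_erase hk, gzWeight_gzShift_of_ne hm.symm hm''.symm,
    (gzShift_commute c c m j m' k).eq, gzWeight_gzShift_neighbour_of_notMem hm (notMem_erase k J')]
  simp only [gzShift, hm, hm.symm, and_self, false_and, if_true, if_false]
  ring

lemma serreCoeff_gzWeight_neighbour_of_ne (hm : m ≠ m') (hm'' : m ≠ m'') (hk : k ∈ J')
    (hjl : j ≠ l) (γ : GZ) :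
    serreCoeff (gzWeight c m m' J J') (gzShift c m) (gzWeight c m' m'' J' J'') (gzShift c m')
      k γ j l =
    c * gzWeight c m' m'' J' J'' k γ * ((γ m j - γ m l + c) *
      (gzWeight c m m' J (J'.erase k) j γ *
        gzWeight c m m' J (J'.erase k) l (gzShift c m j γ))) := by
  simp only [serreCoeff, gzWeight_eq_mul_erase hk, gzWeight_gzShift_of_ne hm.symm hm''.symm,
    (gzShift_commute c c m j m' k).eq, gzWeight_gzShift_neighbour_of_notMem hm (notMem_erase k J')]
  simp only [gzShift, hm, hm.symm, hjl.symm, and_self, false_and, and_false, if_true, if_false]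
  ring

lemma lie_lie_gzOperator_neighbour_apply (hm : m ≠ m') (hm'' : m ≠ m'')
    (hγ : (J : Set ℕ).Pairwise fun s t => γ m s - γ m t ≠ c) (f : GZ → ℂ) :
    ⁅gzOperator c m m' J J', ⁅gzOperator c m m' J J', gzOperator c m' m'' J' J''⁆⁆ f γ = 0 := by
  refine lie_lie_weightedShift_apply_eq_zero (fun j l => gzShift_commute c c m j m l)
    (fun j k => gzShift_commute c c m j m' k)
    (fun k hk j _ => serreCoeff_gzWeight_neighbour_self hm hm'' hk j γ)
    (fun k hk j hj l hl hjl => ?_) f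
  rw [serreCoeff_gzWeight_neighbour_of_ne hm hm'' hk hjl,
    serreCoeff_gzWeight_neighbour_of_ne hm hm'' hk hjl.symm, ← mul_add,
    gzWeight_exchange hm hj hl hjl hγ, mul_zero]

lemma serreCoeff_neighbour_gzWeight_self (hm : m ≠ m') (hm'' : m ≠ m'') (hj : j ∈ J') (k : ℕ)
    (γ : GZ) :
    serreCoeff (gzWeight c m' m'' J' J'') (gzShift c m') (gzWeight c m m' J J') (gzShift c m)
      k γ j j = 0 := by
  simp only [serreCoeff, gzWeight_eq_mul_erase hj, gzWeight_gzShift_of_ne hm.symm hm''.symm,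
    (gzShift_commute c c m' j m k).eq, gzWeight_gzShift_neighbour_of_notMem hm (notMem_erase j J')]
  simp only [gzShift, hm, and_self, false_and, if_true, if_false]
  ring

lemma serreCoeff_neighbour_gzWeight_of_ne (hm : m ≠ m') (hm'' : m ≠ m'') (hj : j ∈ J')
    (hl : l ∈ J') (hjl : j ≠ l) (k : ℕ) (γ : GZ) :
    serreCoeff (gzWeight c m' m'' J' J'') (gzShift c m') (gzWeight c m m' J J') (gzShift c m)
      k γ j l =
    c * gzWeight c m m' J ((J'.erase j).erase l) k γ * ((γ m' j - γ m' l + c) *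
      (gzWeight c m' m'' J' J'' j γ * gzWeight c m' m'' J' J'' l (gzShift c m' j γ))) := by
  have j_notMem : j ∉ (J'.erase j).erase l := fun h => notMem_erase j J' (mem_of_mem_erase h)
  simp only [serreCoeff, gzWeight_eq_mul_erase hj,
    gzWeight_eq_mul_erase (mem_erase.2 ⟨hjl.symm, hl⟩),
    gzWeight_gzShift_of_ne hm.symm hm''.symm, (gzShift_commute c c m' j m k).eq,
    gzWeight_gzShift_neighbour_of_notMem hm (notMem_erase l (J'.erase j)),
    gzWeight_gzShift_neighbour_of_notMem hm j_notMem]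
  simp only [gzShift, hm, hjl, hjl.symm, and_self, false_and, and_false, if_true, if_false]
  ring

lemma lie_lie_neighbour_gzOperator_apply (hm : m ≠ m') (hm' : m' ≠ m'') (hm'' : m ≠ m'')
    (hγ : (J' : Set ℕ).Pairwise fun s t => γ m' s - γ m' t ≠ c) (f : GZ → ℂ) :
    ⁅gzOperator c m' m'' J' J'', ⁅gzOperator c m' m'' J' J'', gzOperator c m m' J J'⁆⁆ f γ = 0 := by
  refine lie_lie_weightedShift_apply_eq_zero (fun j l => gzShift_commute c c m' j m' l)
    (fun j k => gzShift_commute c c m' j m k)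
    (fun k _ j hj => serreCoeff_neighbour_gzWeight_self hm hm'' hj k γ)
    (fun k _ j hj l hl hjl => ?_) f
  rw [serreCoeff_neighbour_gzWeight_of_ne hm hm'' hj hl hjl,
    serreCoeff_neighbour_gzWeight_of_ne hm hm'' hl hj hjl.symm, erase_right_comm, ← mul_add,
    gzWeight_exchange hm' hj hl hjl hγ, mul_zero]

end GelfandZetlinOperator

lemma pairwise_sub_ne_of_div_ne {z : ℕ → ℂ} {c : ℂ} (hc : c ≠ 0) {n : ℕ} {b : ℤ}
    (hz : ∀ j s : ℕ, 1 ≤ j → j < s → s ≤ n → ∀ p : ℤ, |p| ≤ b → (z j - z s) / c ≠ p)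
    {q : ℤ} (hq : |q| ≤ b) :
    (Icc 1 n : Set ℕ).Pairwise fun j s => z j - z s ≠ q * c := by
  intro j hj s hs hjs h
  rw [mem_coe, mem_Icc] at hj hs
  rcases hjs.lt_or_gt with hlt | hgt
  · exact hz j s hj.1 hlt hs.2 q hq (by rw [h, mul_div_cancel_right₀ _ hc])
  · refine hz s j hs.1 hgt hj.2 (-q) (by rwa [abs_neg]) ?_
    rw [← neg_sub, h, neg_div, mul_div_cancel_right₀ _ hc, Int.cast_neg]

theorem gz_serre_relations_general (ℏ : ℝ) (hℏ : ℏ ≠ 0) (n : ℕ) (hn : 1 ≤ n) (γ : GZ)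
    (hγ : ∀ m ∈ Icc n (n + 1), ∀ j s : ℕ, 1 ≤ j → j < s → s ≤ m →
      ∀ p : ℤ, |p| ≤ 1 → (γ m j - γ m s) / (Complex.I * ℏ) ≠ (p : ℂ))
    (f : GZ → ℂ) :
    gzComm (Eraise ℏ n) (gzComm (Eraise ℏ n) (Eraise ℏ (n + 1))) f γ = 0 ∧
    gzComm (Eraise ℏ (n + 1)) (gzComm (Eraise ℏ n) (Eraise ℏ (n + 1))) f γ = 0 ∧
    gzComm (Elower ℏ n) (gzComm (Elower ℏ n) (Elower ℏ (n + 1))) f γ = 0 ∧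
    gzComm (Elower ℏ (n + 1)) (gzComm (Elower ℏ n) (Elower ℏ (n + 1))) f γ = 0 := by
  have hc : Complex.I * (ℏ : ℂ) ≠ 0 :=
    mul_ne_zero Complex.I_ne_zero (Complex.ofReal_ne_zero.2 hℏ)
  have raise_regular : ∀ m ∈ Icc n (n + 1),
      (Icc 1 m : Set ℕ).Pairwise fun j s => γ m j - γ m s ≠ -(Complex.I * ℏ) := fun m hm => by
    simpa using pairwise_sub_ne_of_div_ne hc (hγ m hm) (q := -1) (by simp)
  have lower_regular : ∀ m ∈ Icc n (n + 1),
      (Icc 1 m : Set ℕ).Pairwise fun j s => γ m j - γ m s ≠ Complex.I * ℏ := fun m hm => by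
    simpa using pairwise_sub_ne_of_div_ne hc (hγ m hm) (q := 1) (by simp)
  have hn_mem : n ∈ Icc n (n + 1) := left_mem_Icc.2 n.le_succ
  have hsucc_mem : n + 1 ∈ Icc n (n + 1) := right_mem_Icc.2 n.le_succ
  simp only [Eraise_eq_gzOperator, Elower_eq_gzOperator, gzComm_coe, Nat.add_sub_cancel,
    lie_lie_skew (gzOperator _ n _ _ _), LinearMap.neg_apply, Pi.neg_apply, neg_eq_zero]
  refine ⟨?_, ?_, ?_, ?_⟩
  · exact lie_lie_gzOperator_neighbour_apply (by omega) (by omega) (raise_regular n hn_mem) f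
  · exact lie_lie_neighbour_gzOperator_apply (by omega) (by omega) (by omega)
      (raise_regular (n + 1) hsucc_mem) f
  · exact lie_lie_neighbour_gzOperator_apply (by omega) (by omega) (by omega)
      (lower_regular n hn_mem) f
  · exact lie_lie_gzOperator_neighbour_apply (by omega) (by omega)
      (lower_regular (n + 1) hsucc_mem) f

/-- the Serre relations for the Gelfand–Zetlin operators hold pointwise
at every non-resonant array. -/
theorem gz_serre_relations (ℏ : ℝ) (hℏ : 0 < ℏ) (N : ℕ) (hN : 2 ≤ N)
    (γ : GZ) (hγ : NonResonant ℏ N γ) :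
    ∀ n : ℕ, 1 ≤ n → n ≤ N - 2 → ∀ f : GZ → ℂ,
      gzComm (Eraise ℏ n) (gzComm (Eraise ℏ n) (Eraise ℏ (n + 1))) f γ = 0 ∧
      gzComm (Eraise ℏ (n + 1)) (gzComm (Eraise ℏ n) (Eraise ℏ (n + 1))) f γ = 0 ∧
      gzComm (Elower ℏ n) (gzComm (Elower ℏ n) (Elower ℏ (n + 1))) f γ = 0 ∧
      gzComm (Elower ℏ (n + 1)) (gzComm (Elower ℏ n) (Elower ℏ (n + 1))) f γ = 0 := by
  intro n hn hnN f
  exact gz_serre_relations_general ℏ hℏ.ne' n hn γ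
    (fun m hm j s hj hjs hs p _ => hγ m (by grind) j s hj hjs hs p) f
end
end

section
/- Fix ℏ > 0, N ≥ 2, complex numbers γ_{N1},…,γ_{NN}, and real numbers x_1,…,x_N. Let η = (η_{nj}), 1 ≤ j ≤ n ≤ N−1, be real numbers, set η_{Nm} := Im γ_{Nm}, and assume that for every 1 ≤ n ≤ N−1, min_{1≤j≤n} η_{nj} > max_{1≤m≤n+1} η_{n+1,m}. Then the function ℝ^{N(N−1)/2} → ℂ sending ξ = (ξ_{nj})_{1≤j≤n≤N−1} to F(ξ) = ∏_{n=1}^{N−1} [∏_{k=1}^{n}∏_{m=1}^{n+1} ℏ^{(γ_{nk} − γ_{n+1,m})/(iℏ)}·Γ((γ_{nk} − γ_{n+1,m})/(iℏ)) / ∏_{s≠p, s,p≤n} Γ((γ_{ns} − γ_{np})/(iℏ))]·exp((i/ℏ)·Σ_{n=1}^{N}(Σ_{j=1}^{n} γ_{nj} − Σ_{j=1}^{n−1} γ_{n−1,j})·x_n), where γ_{nj} = ξ_{nj} + iη_{nj} for n ≤ N−1, is Lebesgue integrable on ℝ^{N(N−1)/2}; that is, the Mellin–Barnes integral representation of the GL(N,ℝ)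 open Toda chain wave function converges absolutely. -/
open Finset MeasureTheory

noncomputable section

/-- Index set of the Gelfand–Zetlin variables `(n, j)` with `1 ≤ j ≤ n ≤ N − 1`
(the pair `(p.1, p.2)` encodes `(n, j)`). -/
abbrev GZIdx (N : ℕ) := {p : Fin N × Fin N // 1 ≤ (p.2 : ℕ) ∧ (p.2 : ℕ) ≤ (p.1 : ℕ)}

/-- The Gelfand–Zetlin array on the tube: lower levels `γ_{nj} = ξ_{nj} + iη_{nj}`,
top row `g`. -/
def gzTube (N : ℕ) (g : ℕ → ℂ) (η : ℕ → ℕ → ℝ) (ξ : GZIdx N → ℝ) : GZ := fun n j =>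
  if h : 1 ≤ j ∧ j ≤ n ∧ n < N then
    ((ξ ⟨(⟨n, h.2.2⟩, ⟨j, lt_of_le_of_lt h.2.1 h.2.2⟩), h.1, h.2.1⟩ : ℝ) : ℂ) +
      Complex.I * (η n j : ℂ)
  else g j

/-- `ℏ^z := exp(z log ℏ)`. -/
def hpow (ℏ : ℝ) (z : ℂ) : ℂ := Complex.exp (z * (Real.log ℏ : ℂ))

/-- The integrand of the Mellin–Barnes representation of the `GL(N,ℝ)` open Toda
chain wave function (`x n` is the Toda variable `x_n`, `1 ≤ n ≤ N`). -/
def todaIntegrand (ℏ : ℝ) (N : ℕ) (x : ℕ → ℝ) (γ : GZ) : ℂ :=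
  (∏ n ∈ Icc 1 (N - 1),
    (∏ k ∈ Icc 1 n, ∏ m ∈ Icc 1 (n + 1),
      hpow ℏ ((γ n k - γ (n + 1) m) / (Complex.I * ℏ)) *
        Complex.Gamma ((γ n k - γ (n + 1) m) / (Complex.I * ℏ))) /
      ∏ s ∈ Icc 1 n, ∏ p ∈ (Icc 1 n).erase s,
        Complex.Gamma ((γ n s - γ n p) / (Complex.I * ℏ))) *
    Complex.exp ((Complex.I / (ℏ : ℂ)) * ∑ n ∈ Icc 1 N,
      ((∑ j ∈ Icc 1 n, γ n j) - ∑ j ∈ Icc 1 (n - 1), γ (n - 1) j) * (x n : ℂ))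

/-!
On a vertical line `Γ` decays like `e^{-π|y|/2}` up to an arbitrarily small loss in the exponent.
On `Re s = 1/2` this is the reflection formula, and Euler's Beta integral together with
`Γ(s + 1) = sΓ(s)` carries it to the other lines. Writing `y_n` for the `n`-th row of real parts,
the integrand is thus bounded by the exponential of
`-(π/2ℏ) ∑_n (∑_{k,m} |y_{nk} - y_{n+1,m}| - ∑_{s,p} |y_{ns} - y_{np}|)`, again up to a small loss.

Splitting each self-distance sum in two halves, the sum over `n` telescopes into the energies
`E_n = ∑_{k,m} |y_{nk} - y_{n+1,m}| - ½ ∑ |y_{ns} - y_{np}| - ½ ∑ |y_{n+1,s} - y_{n+1,p}|` plus a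
nonnegative boundary term. By the layer-cake formula `E_n = ∫ d(d - 1) dτ`, where `d(τ)` is the
integer `#{m | τ ≤ y_{n+1,m}} - #{k | τ ≤ y_{nk}}`. Hence `E_n ≥ 0`, and since `d(d - 1) ≥ 2` as
soon as `τ` separates an entry of row `n` from the whole row `n + 1`, the energy controls how far
row `n` reaches beyond row `n + 1`. Descending from the fixed top row, the energies control every
variable, which absorbs the small loss and leaves a bound `C e^{-c‖ξ‖}`.
-/

open Asymptotics Filter
open scoped Real

/-! ### Decay of the Gamma function along vertical lines -/

lemma isBigO_exp_of_le_add {α : Type*} {f g : α → ℝ} (C : ℝ) (h : ∀ x, f x ≤ g x + C) :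
    (fun x => Real.exp (f x)) =O[⊤] fun x => Real.exp (g x) := by
  refine isBigO_of_le' (c := Real.exp C) _ fun x => ?_
  rw [Real.norm_of_nonneg (Real.exp_pos _).le, Real.norm_of_nonneg (Real.exp_pos _).le,
    ← Real.exp_add, add_comm C]
  exact Real.exp_le_exp.2 (h x)

lemma norm_betaIntegral_le {u v : ℂ} (hu : 0 < u.re) (hv : 0 < v.re) :
    ‖u.betaIntegral v‖ ≤ ProbabilityTheory.beta u.re v.re := by
  have norm_integrand : ∀ x ∈ Set.Ioo (0 : ℝ) 1,
      ‖(x : ℂ) ^ (u - 1) * (1 - (x : ℂ)) ^ (v - 1)‖ =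
        ((x : ℂ) ^ ((u.re : ℂ) - 1) * (1 - (x : ℂ)) ^ ((v.re : ℂ) - 1)).re := by
    rintro x ⟨hx0, hx1⟩
    have h1x : 0 < 1 - x := sub_pos.2 hx1
    have cpow_re : ∀ t : ℝ, 0 < t → ∀ w : ℂ, ‖(t : ℂ) ^ (w - 1)‖ = t ^ (w.re - 1) :=
      fun t ht w => by simp [Complex.norm_cpow_eq_rpow_re_of_pos ht]
    rw [norm_mul, ← Complex.ofReal_one, ← Complex.ofReal_sub, Complex.ofReal_one,
      cpow_re x hx0, cpow_re _ h1x, ← Complex.ofReal_one, ← Complex.ofReal_sub,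
      ← Complex.ofReal_sub, ← Complex.ofReal_cpow hx0.le, ← Complex.ofReal_cpow h1x.le,
      ← Complex.ofReal_mul, Complex.ofReal_re]
  have integrable_real := Complex.betaIntegral_convergent
    (u := u.re) (v := v.re) (by simpa using hu) (by simpa using hv)
  rw [ProbabilityTheory.beta_eq_betaIntegralReal _ _ hu hv, Complex.betaIntegral,
    Complex.betaIntegral]
  simp only [intervalIntegral.integral_of_le zero_le_one, integral_Ioc_eq_integral_Ioo] at *
  rw [← RCLike.re_eq_complex_re, ← integral_re]
  · exact (norm_integral_le_integral_norm _).trans_eq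
      (setIntegral_congr_fun measurableSet_Ioo norm_integrand)
  · exact (intervalIntegrable_iff_integrableOn_Ioo_of_le zero_le_one).1 integrable_real

lemma norm_Gamma_mul_Gamma_le {s : ℂ} (hs : 0 < s.re) {t : ℝ} (ht : 0 < t) :
    ‖Complex.Gamma s‖ * Real.Gamma (s.re + t) ≤ ‖Complex.Gamma (s + t)‖ * Real.Gamma s.re := by
  have Gamma_t_pos := Real.Gamma_pos_of_pos ht
  have Gamma_sum_pos := Real.Gamma_pos_of_pos (add_pos hs ht)
  have beta_identity := congrArg norm
    (Complex.Gamma_mul_Gamma_eq_betaIntegral hs (t := t) (by simpa using ht))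
  rw [norm_mul, norm_mul, Complex.Gamma_ofReal, Complex.norm_of_nonneg Gamma_t_pos.le]
    at beta_identity
  have beta_bound := norm_betaIntegral_le hs (v := t) (by simpa using ht)
  rw [ProbabilityTheory.beta, Complex.ofReal_re, le_div_iff₀ Gamma_sum_pos] at beta_bound
  refine le_of_mul_le_mul_right ?_ Gamma_t_pos
  calc ‖Complex.Gamma s‖ * Real.Gamma (s.re + t) * Real.Gamma t
      = ‖Complex.Gamma (s + t)‖ * (‖s.betaIntegral t‖ * Real.Gamma (s.re + t)) := by
        rw [mul_right_comm, beta_identity, mul_assoc]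
    _ ≤ ‖Complex.Gamma (s + t)‖ * (Real.Gamma s.re * Real.Gamma t) := by gcongr
    _ = ‖Complex.Gamma (s + t)‖ * Real.Gamma s.re * Real.Gamma t := by ring

lemma Gamma_vertical_isBigO_Gamma_vertical {a b : ℝ} (ha : 0 < a) (hab : a < b) :
    (fun y : ℝ => Complex.Gamma (a + y * Complex.I)) =O[⊤]
      fun y : ℝ => Complex.Gamma (b + y * Complex.I) := by
  refine isBigO_top.2 ⟨Real.Gamma a / Real.Gamma b, fun y => ?_⟩
  have shift : (a + y * Complex.I + (b - a : ℝ) : ℂ) = b + y * Complex.I := by push_cast; ring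
  have compare := norm_Gamma_mul_Gamma_le (s := a + y * Complex.I) (by simpa using ha)
    (sub_pos.2 hab)
  rw [shift] at compare
  simp only [Complex.add_re, Complex.ofReal_re, Complex.re_ofReal_mul, Complex.I_re, mul_zero,
    add_zero, add_sub_cancel] at compare
  rwa [div_mul_eq_mul_div, le_div_iff₀ (Real.Gamma_pos_of_pos (ha.trans hab)),
    mul_comm (Real.Gamma a)]

lemma norm_Gamma_half_vertical_sq (y : ℝ) :
    ‖Complex.Gamma ((1 / 2 : ℝ) + y * Complex.I)‖ ^ 2 = π / Real.cosh (π * y) := by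
  have one_sub_eq_conj : (1 : ℂ) - ((1 / 2 : ℝ) + y * Complex.I) =
      (starRingEnd ℂ) ((1 / 2 : ℝ) + y * Complex.I) := by
    apply Complex.ext <;> norm_num
  have sin_eq_cosh : Complex.sin (π * ((1 / 2 : ℝ) + y * Complex.I)) = Real.cosh (π * y) := by
    have shift : (π * ((1 / 2 : ℝ) + y * Complex.I) : ℂ) = (π * y : ℂ) * Complex.I + π / 2 := by
      push_cast; ring
    rw [shift, Complex.sin_add_pi_div_two, Complex.cos_mul_I, Complex.ofReal_cosh,
      Complex.ofReal_mul]
  have reflection := Complex.Gamma_mul_Gamma_one_sub ((1 / 2 : ℝ) + y * Complex.I)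
  rw [one_sub_eq_conj, Complex.Gamma_conj, Complex.mul_conj', sin_eq_cosh] at reflection
  exact_mod_cast reflection

lemma cosh_isTheta_exp_abs : Real.cosh =Θ[⊤] fun u => Real.exp |u| := by
  constructor
  · refine isBigO_of_le _ fun u => ?_
    rw [Real.norm_of_nonneg (Real.cosh_pos u).le, Real.norm_of_nonneg (Real.exp_pos _).le,
      Real.cosh_eq]
    have := Real.exp_le_exp.2 (le_abs_self u)
    have := Real.exp_le_exp.2 (neg_le_abs u)
    linarith
  · refine isBigO_of_le' (c := 2) _ fun u => ?_
    rw [Real.norm_of_nonneg (Real.cosh_pos u).le, Real.norm_of_nonneg (Real.exp_pos _).le,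
      Real.cosh_eq]
    linarith [Real.exp_abs_le u]

lemma Gamma_half_vertical_isTheta :
    (fun y : ℝ => Complex.Gamma ((1 / 2 : ℝ) + y * Complex.I)) =Θ[⊤]
      fun y => Real.exp (-(π / 2) * |y|) := by
  have sq_isTheta : ((fun y : ℝ => ‖Complex.Gamma ((1 / 2 : ℝ) + y * Complex.I)‖) ^ 2) =Θ[⊤]
      ((fun y => Real.exp (-(π / 2) * |y|)) ^ 2) := by
    have norm_sq : (fun y : ℝ => ‖Complex.Gamma ((1 / 2 : ℝ) + y * Complex.I)‖) ^ 2 =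
        fun y => π * (Real.cosh (π * y))⁻¹ := funext norm_Gamma_half_vertical_sq
    have exp_sq : (fun y => Real.exp (-(π / 2) * |y|)) ^ 2 =
        fun y => (Real.exp |π * y|)⁻¹ := by
      funext y
      rw [Pi.pow_apply, ← Real.exp_nat_mul, ← Real.exp_neg, abs_mul, abs_of_pos Real.pi_pos]
      congr 1; push_cast; ring
    rw [norm_sq, exp_sq, isTheta_const_mul_left Real.pi_ne_zero]
    exact IsTheta.inv ⟨cosh_isTheta_exp_abs.1.comp_tendsto tendsto_top,
      cosh_isTheta_exp_abs.2.comp_tendsto tendsto_top⟩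
  exact isTheta_norm_left.1 ⟨sq_isTheta.1.of_pow two_ne_zero, sq_isTheta.2.of_pow two_ne_zero⟩

lemma vertical_isBigO_exp (a : ℝ) {ε : ℝ} (hε : 0 < ε) :
    (fun y : ℝ => (a : ℂ) + y * Complex.I) =O[⊤] fun y => Real.exp (ε * |y|) := by
  refine IsBigO.add (isBigO_of_le' (c := |a|) _ fun y => ?_)
    (isBigO_of_le' (c := ε⁻¹) _ fun y => ?_)
  · have one_le := Real.one_le_exp (mul_nonneg hε.le (abs_nonneg y))
    simpa using le_mul_of_one_le_right (abs_nonneg a) one_le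
  · have := Real.add_one_le_exp (ε * |y|)
    rw [Real.norm_of_nonneg (Real.exp_pos _).le, inv_mul_eq_div, le_div_iff₀ hε]
    simp only [norm_mul, Complex.norm_real, Real.norm_eq_abs, Complex.norm_I]
    linarith

lemma isBigO_mul_exp_of_forall_pos {f g : ℝ → ℂ}
    (hf : ∀ ε > 0, f =O[⊤] fun y => Real.exp (ε * |y|))
    {c : ℝ} (hg : ∀ ε > 0, g =O[⊤] fun y => Real.exp ((c + ε) * |y|)) {ε : ℝ} (hε : 0 < ε) :
    (fun y => f y * g y) =O[⊤] fun y => Real.exp ((c + ε) * |y|) := by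
  refine ((hf (ε / 2) (half_pos hε)).mul (hg (ε / 2) (half_pos hε))).congr_right fun y => ?_
  rw [← Real.exp_add]
  congr 1
  ring

lemma Gamma_half_add_nat_vertical_isBigO (m : ℕ) {ε : ℝ} (hε : 0 < ε) :
    (fun y : ℝ => Complex.Gamma ((1 / 2 + m : ℝ) + y * Complex.I)) =O[⊤]
      fun y => Real.exp ((-(π / 2) + ε) * |y|) := by
  induction m generalizing ε with
  | zero =>
    simp only [Nat.cast_zero, add_zero]
    refine Gamma_half_vertical_isTheta.1.trans (isBigO_exp_of_le_add 0 fun y => ?_)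
    rw [add_zero]
    gcongr
    linarith
  | succ m ih =>
    refine (isBigO_mul_exp_of_forall_pos (fun ε hε => vertical_isBigO_exp (1 / 2 + m) hε)
      (fun ε hε => ih hε) hε).congr_left fun y => ?_
    have ne_zero : ((1 / 2 + m : ℝ) + y * Complex.I : ℂ) ≠ 0 := fun h => by
      have re_eq_zero : (1 / 2 + m : ℝ) = 0 := by simpa using congrArg Complex.re h
      have : (0 : ℝ) < 1 / 2 + m := by positivity
      exact this.ne' re_eq_zero
    rw [← Complex.Gamma_add_one _ ne_zero]
    congr 1
    push_cast
    ring

lemma Gamma_vertical_isBigO {a : ℝ} (ha : 0 < a) {ε : ℝ} (hε : 0 < ε) :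
    (fun y : ℝ => Complex.Gamma (a + y * Complex.I)) =O[⊤]
      fun y => Real.exp ((-(π / 2) + ε) * |y|) := by
  obtain ⟨m, hm⟩ := exists_nat_ge a
  exact (Gamma_vertical_isBigO_Gamma_vertical ha (by linarith)).trans
    (Gamma_half_add_nat_vertical_isBigO m hε)

lemma inv_Gamma_vertical_isBigO_of_half_lt {a : ℝ} (ha : 1 / 2 < a) :
    (fun y : ℝ => (Complex.Gamma (a + y * Complex.I))⁻¹) =O[⊤]
      fun y => Real.exp ((π / 2) * |y|) := by
  have half_ne_zero : ∀ y : ℝ, Complex.Gamma ((1 / 2 : ℝ) + y * Complex.I) ≠ 0 := fun y =>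
    Complex.Gamma_ne_zero_of_re_pos (by simp)
  have compare := (Gamma_vertical_isBigO_Gamma_vertical one_half_pos ha).inv_rev
    (.of_forall fun y h => absurd h (half_ne_zero y))
  refine compare.trans (Gamma_half_vertical_isTheta.inv.1.congr_right fun y => ?_)
  rw [← Real.exp_neg, neg_mul, neg_neg]

lemma inv_Gamma_vertical_isBigO (a : ℝ) {ε : ℝ} (hε : 0 < ε) :
    (fun y : ℝ => (Complex.Gamma (a + y * Complex.I))⁻¹) =O[⊤]
      fun y => Real.exp ((π / 2 + ε) * |y|) := by
  obtain ⟨m, hm⟩ := exists_nat_gt (1 / 2 - a)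
  induction m generalizing a ε with
  | zero =>
    rw [Nat.cast_zero, sub_neg] at hm
    refine (inv_Gamma_vertical_isBigO_of_half_lt hm).trans (isBigO_exp_of_le_add 0 fun y => ?_)
    rw [add_zero]
    gcongr
    linarith
  | succ m ih =>
    push_cast at hm
    refine (isBigO_mul_exp_of_forall_pos (fun ε hε => vertical_isBigO_exp a hε)
      (fun ε hε => ih (a + 1) hε (by linarith)) hε).congr_left fun y => ?_
    rw [Complex.one_div_Gamma_eq_self_mul_one_div_Gamma_add_one (a + y * Complex.I)]
    congr 3
    push_cast
    ring

lemma measurable_Gamma : Measurable Complex.Gamma := by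
  simpa only [Pi.inv_def, inv_inv] using
    Complex.differentiable_one_div_Gamma.continuous.measurable.inv

/-! ### Energy of two point configurations on the line -/

section Energy

variable {ι κ : Type*}

/-- The total distance between two finite configurations of real points, in which the exponential
rates of the Gamma factors are expressed. -/
def sumDist (s : Finset ι) (t : Finset κ) (x : ι → ℝ) (y : κ → ℝ) : ℝ :=
  ∑ k ∈ s, ∑ m ∈ t, |x k - y m|

/-- The energy distance of the counting measures of two finite configurations: their cross distance
minus half of each self-distance. Unordered pairs enter `sumDist s s x x` twice. -/
def energy (s : Finset ι) (t : Finset κ) (x : ι → ℝ) (y : κ → ℝ) : ℝ :=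
  sumDist s t x y - sumDist s s x x / 2 - sumDist t t y y / 2

/-- The number of points of a configuration at or above the level `τ`. -/
def countGE (s : Finset ι) (x : ι → ℝ) (τ : ℝ) : ℕ := #{k ∈ s | τ ≤ x k}

lemma sumDist_nonneg (s : Finset ι) (t : Finset κ) (x : ι → ℝ) (y : κ → ℝ) :
    0 ≤ sumDist s t x y :=
  sum_nonneg fun _ _ => sum_nonneg fun _ _ => abs_nonneg _

lemma sumDist_le {s : Finset ι} {t : Finset κ} {x : ι → ℝ} {y : κ → ℝ} {Z : ℝ}
    (hx : ∀ k ∈ s, |x k| ≤ Z) (hy : ∀ m ∈ t, |y m| ≤ Z) :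
    sumDist s t x y ≤ (#s * #t * 2 : ℝ) * Z := by
  calc sumDist s t x y ≤ ∑ _k ∈ s, ∑ _m ∈ t, (Z + Z) :=
        sum_le_sum fun k hk => sum_le_sum fun m hm =>
          (abs_sub _ _).trans (add_le_add (hx k hk) (hy m hm))
    _ = (#s * #t * 2 : ℝ) * Z := by
        simp only [sum_const, nsmul_eq_mul]
        ring

lemma sumDist_neg (s : Finset ι) (t : Finset κ) (x : ι → ℝ) (y : κ → ℝ) :
    sumDist s t (-x) (-y) = sumDist s t x y := by
  simp only [sumDist, Pi.neg_apply, neg_sub_neg, abs_sub_comm]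

lemma energy_neg (s : Finset ι) (t : Finset κ) (x : ι → ℝ) (y : κ → ℝ) :
    energy s t (-x) (-y) = energy s t x y := by
  simp only [energy, sumDist_neg]

lemma integrable_indicator_uIoc (a b : ℝ) :
    Integrable ((Set.uIoc a b).indicator (1 : ℝ → ℝ)) :=
  (integrable_indicator_iff measurableSet_uIoc).2
    (integrableOn_const (by simp [Real.volume_uIoc]))

lemma integral_indicator_uIoc (a b : ℝ) :
    ∫ τ, (Set.uIoc a b).indicator (1 : ℝ → ℝ) τ = |a - b| := by
  rw [integral_indicator_one measurableSet_uIoc, measureReal_def, Real.volume_uIoc,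
    ENNReal.toReal_ofReal (abs_nonneg _), abs_sub_comm]

lemma sum_indicator_uIoc (s : Finset ι) (t : Finset κ) (x : ι → ℝ) (y : κ → ℝ) (τ : ℝ) :
    ∑ k ∈ s, ∑ m ∈ t, (Set.uIoc (x k) (y m)).indicator (1 : ℝ → ℝ) τ =
      countGE s x τ * (#t - countGE t y τ) + (#s - countGE s x τ) * countGE t y τ := by
  have indicator_eq : ∀ k m, (Set.uIoc (x k) (y m)).indicator (1 : ℝ → ℝ) τ =
      (if τ ≤ x k then 1 else 0) * (1 - if τ ≤ y m then 1 else 0) +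
        (1 - if τ ≤ x k then 1 else 0) * if τ ≤ y m then 1 else 0 := fun k m => by
    by_cases hk : τ ≤ x k <;> by_cases hm : τ ≤ y m <;>
      simp [Set.indicator, Set.mem_uIoc, hk, hm, not_lt.2, not_le.1]
  simp only [indicator_eq, sum_add_distrib, ← mul_sum, ← sum_mul, sum_sub_distrib, sum_boole,
    sum_const, nsmul_eq_mul, mul_one, countGE]

lemma integrable_sum_indicator_uIoc (s : Finset ι) (t : Finset κ) (x : ι → ℝ) (y : κ → ℝ) :
    Integrable fun τ => ∑ k ∈ s, ∑ m ∈ t, (Set.uIoc (x k) (y m)).indicator (1 : ℝ → ℝ) τ :=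
  integrable_finsetSum _ fun _ _ => integrable_finsetSum _ fun _ _ =>
    integrable_indicator_uIoc _ _

lemma sumDist_eq_integral (s : Finset ι) (t : Finset κ) (x : ι → ℝ) (y : κ → ℝ) :
    sumDist s t x y =
      ∫ τ, ∑ k ∈ s, ∑ m ∈ t, (Set.uIoc (x k) (y m)).indicator (1 : ℝ → ℝ) τ := by
  rw [integral_finsetSum _ fun _ _ => integrable_finsetSum _ fun _ _ =>
    integrable_indicator_uIoc _ _]
  refine sum_congr rfl fun k _ => ?_
  simp only [integral_finsetSum _ fun _ _ => integrable_indicator_uIoc _ _,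
    integral_indicator_uIoc]

/-- The layer-cake density of `energy`: with `d` the difference of the two counting functions, it is
`d * (d - (#t - #s))`, integer-valued so that it is nonnegative when `#t = #s + 1`. -/
def energyDensity (s : Finset ι) (t : Finset κ) (x : ι → ℝ) (y : κ → ℝ) (τ : ℝ) : ℤ :=
  (countGE t y τ - countGE s x τ) * (countGE t y τ - countGE s x τ - (#t - #s))

lemma energyDensity_eq (s : Finset ι) (t : Finset κ) (x : ι → ℝ) (y : κ → ℝ) (τ : ℝ) :
    (energyDensity s t x y τ : ℝ) =
      ∑ k ∈ s, ∑ m ∈ t, (Set.uIoc (x k) (y m)).indicator (1 : ℝ → ℝ) τ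
      - (∑ k ∈ s, ∑ m ∈ s, (Set.uIoc (x k) (x m)).indicator (1 : ℝ → ℝ) τ) / 2
      - (∑ k ∈ t, ∑ m ∈ t, (Set.uIoc (y k) (y m)).indicator (1 : ℝ → ℝ) τ) / 2 := by
  simp only [sum_indicator_uIoc, energyDensity]
  push_cast
  ring

lemma integrable_energyDensity (s : Finset ι) (t : Finset κ) (x : ι → ℝ) (y : κ → ℝ) :
    Integrable fun τ => (energyDensity s t x y τ : ℝ) := by
  simp only [energyDensity_eq]
  exact ((integrable_sum_indicator_uIoc s t x y).sub
    ((integrable_sum_indicator_uIoc s s x x).div_const 2)).sub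
    ((integrable_sum_indicator_uIoc t t y y).div_const 2)

lemma energy_eq_integral (s : Finset ι) (t : Finset κ) (x : ι → ℝ) (y : κ → ℝ) :
    energy s t x y = ∫ τ, (energyDensity s t x y τ : ℝ) := by
  have cross := integrable_sum_indicator_uIoc s t x y
  have left := (integrable_sum_indicator_uIoc s s x x).div_const 2
  have right := (integrable_sum_indicator_uIoc t t y y).div_const 2
  simp only [energyDensity_eq, energy, sumDist_eq_integral, ← integral_div]
  rw [← integral_sub cross left]
  exact (integral_sub (cross.sub left) right).symm

variable {s : Finset ι} {t : Finset κ} {x : ι → ℝ} {y : κ → ℝ}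

lemma energyDensity_nonneg (hcard : #t = #s + 1) (τ : ℝ) : 0 ≤ energyDensity s t x y τ := by
  rw [energyDensity, hcard]
  push_cast
  rw [add_sub_cancel_left]
  rcases le_or_gt ((countGE t y τ : ℤ) - countGE s x τ) 0 with h | h
  · nlinarith
  · exact mul_nonneg h.le (by linarith)

lemma two_le_energyDensity (hcard : #t = #s + 1) {Y τ : ℝ} (hy : ∀ m ∈ t, y m ≤ Y)
    (hYτ : Y < τ) {k : ι} (hk : k ∈ s) (hτx : τ ≤ x k) : 2 ≤ energyDensity s t x y τ := by
  have count_y : countGE t y τ = 0 :=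
    card_eq_zero.2 (filter_eq_empty_iff.2 fun m hm => ((hy m hm).trans_lt hYτ).not_ge)
  have count_x : 1 ≤ countGE s x τ := card_pos.2 ⟨k, mem_filter.2 ⟨hk, hτx⟩⟩
  rw [energyDensity, count_y, hcard]
  zify at count_x
  push_cast
  nlinarith

lemma energy_nonneg (hcard : #t = #s + 1) : 0 ≤ energy s t x y := by
  rw [energy_eq_integral]
  exact integral_nonneg fun τ => Int.cast_nonneg (energyDensity_nonneg hcard τ)

lemma two_mul_sub_le_energy (hcard : #t = #s + 1) {Y : ℝ} (hy : ∀ m ∈ t, y m ≤ Y)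
    {k : ι} (hk : k ∈ s) : 2 * (x k - Y) ≤ energy s t x y := by
  calc 2 * (x k - Y) ≤ ∫ τ, (Set.Ioc Y (x k)).indicator (fun _ => (2 : ℝ)) τ := by
        rw [integral_indicator_const _ measurableSet_Ioc, Real.volume_real_Ioc, smul_eq_mul,
          mul_comm]
        gcongr
        exact le_max_left _ _
    _ ≤ ∫ τ, (energyDensity s t x y τ : ℝ) := by
        refine integral_mono ((integrable_indicator_iff measurableSet_Ioc).2
          (integrableOn_const (by simp))) (integrable_energyDensity s t x y) fun τ => ?_
        refine Set.indicator_apply_le' (fun hτ => ?_)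
          fun _ => Int.cast_nonneg (energyDensity_nonneg hcard τ)
        exact Int.cast_le (R := ℝ) |>.2 (two_le_energyDensity hcard hy hτ.1 hk hτ.2)
    _ = energy s t x y := (energy_eq_integral s t x y).symm

lemma abs_le_add_energy (hcard : #t = #s + 1) {Y : ℝ} (hy : ∀ m ∈ t, |y m| ≤ Y)
    {k : ι} (hk : k ∈ s) : |x k| ≤ Y + energy s t x y := by
  have nonneg := energy_nonneg (x := x) (y := y) hcard
  have upper := two_mul_sub_le_energy (x := x) hcard (fun m hm => (abs_le.1 (hy m hm)).2) hk
  have lower := two_mul_sub_le_energy (x := -x) (y := -y) hcard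
    (fun m hm => neg_le.2 (abs_le.1 (hy m hm)).1) hk
  rw [energy_neg, Pi.neg_apply] at lower
  exact abs_le.2 ⟨by linarith, by linarith⟩

end Energy

/-! ### Coercivity of the decay rate of a triangular array -/

section TriangularArray

/-- The total distance between rows `n` and `n + 1` of a triangular array, whose `n`-th row consists
of the entries `y n j` with `1 ≤ j ≤ n`. -/
def crossDist (y : ℕ → ℕ → ℝ) (n : ℕ) : ℝ :=
  sumDist (Icc 1 n) (Icc 1 (n + 1)) (y n) (y (n + 1))

/-- The total distance of row `n` of a triangular array to itself, over ordered pairs. -/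
def selfDist (y : ℕ → ℕ → ℝ) (n : ℕ) : ℝ := sumDist (Icc 1 n) (Icc 1 n) (y n) (y n)

/-- The energy of rows `n` and `n + 1` of a triangular array. -/
def levelEnergy (y : ℕ → ℕ → ℝ) (n : ℕ) : ℝ :=
  energy (Icc 1 n) (Icc 1 (n + 1)) (y n) (y (n + 1))

/-- The exponential decay rate of the Mellin–Barnes integrand in the real parts `y` of its `M` lower
rows: each Gamma factor in a numerator contributes rate `δ - ε`, each one in a denominator costs
`δ + ε`. Here `δ = π / (2 * ℏ)` and `ε` is the loss in the estimates of `Γ`. -/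
def decayRate (δ ε : ℝ) (M : ℕ) (y : ℕ → ℕ → ℝ) : ℝ :=
  ∑ n ∈ Icc 1 M, ((δ - ε) * crossDist y n - (δ + ε) * selfDist y n)

variable (y : ℕ → ℕ → ℝ) (M : ℕ)

lemma levelEnergy_nonneg (n : ℕ) : 0 ≤ levelEnergy y n := energy_nonneg (by simp)

lemma sum_crossDist_sub_selfDist :
    ∑ n ∈ Icc 1 M, (crossDist y n - selfDist y n) =
      ∑ n ∈ Icc 1 M, levelEnergy y n + selfDist y (M + 1) / 2 := by
  induction M with
  | zero => simp [selfDist, sumDist]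
  | succ M ih =>
    rw [sum_Icc_succ_top (by simp), sum_Icc_succ_top (by simp), ih]
    simp only [levelEnergy, energy, crossDist, selfDist]
    ring

lemma sum_levelEnergy_le :
    ∑ n ∈ Icc 1 M, levelEnergy y n ≤ ∑ n ∈ Icc 1 M, (crossDist y n - selfDist y n) := by
  rw [sum_crossDist_sub_selfDist]
  have : 0 ≤ selfDist y (M + 1) := sumDist_nonneg ..
  linarith

variable {y M} {Y : ℝ}

lemma abs_le_add_sum_Ico_levelEnergy (hY : ∀ m ∈ Icc 1 (M + 1), |y (M + 1) m| ≤ Y)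
    {n : ℕ} (hn : n ≤ M + 1) :
    ∀ k ∈ Icc 1 n, |y n k| ≤ Y + ∑ i ∈ Ico n (M + 1), levelEnergy y i := by
  induction hn using Nat.decreasingInduction with
  | self => simpa using hY
  | of_succ n hn ih =>
    intro k hk
    rw [sum_eq_sum_Ico_succ_bot hn, add_comm (levelEnergy y n), ← add_assoc]
    exact abs_le_add_energy (by simp) ih hk

lemma abs_le_add_sum_levelEnergy (hY : ∀ m ∈ Icc 1 (M + 1), |y (M + 1) m| ≤ Y)
    {n : ℕ} (hn : n ≤ M + 1) {k : ℕ} (hk : k ∈ Icc 1 n) :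
    |y n k| ≤ Y + ∑ i ∈ Icc 1 M, levelEnergy y i := by
  refine (abs_le_add_sum_Ico_levelEnergy hY hn k hk).trans (add_le_add_right ?_ Y)
  refine sum_le_sum_of_subset_of_nonneg (fun i hi => ?_) fun i _ _ => levelEnergy_nonneg y i
  simp only [mem_Icc, mem_Ico] at *
  omega

lemma sum_crossDist_add_selfDist_le (hY : ∀ m ∈ Icc 1 (M + 1), |y (M + 1) m| ≤ Y) :
    ∑ n ∈ Icc 1 M, (crossDist y n + selfDist y n) ≤
      (∑ n ∈ Icc 1 M, (n * (n + 1) * 2 + n * n * 2 : ℝ)) *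
        (Y + ∑ i ∈ Icc 1 M, levelEnergy y i) := by
  rw [sum_mul]
  refine sum_le_sum fun n hn => ?_
  have hnM := (mem_Icc.1 hn).2
  have row := fun k (hk : k ∈ Icc 1 n) => abs_le_add_sum_levelEnergy hY (by omega) hk
  have next_row := fun m (hm : m ∈ Icc 1 (n + 1)) =>
    abs_le_add_sum_levelEnergy hY (by omega) hm
  rw [add_mul]
  refine add_le_add ?_ ?_
  · simpa [crossDist] using sumDist_le row next_row
  · simpa [selfDist] using sumDist_le row row

theorem exists_le_decayRate (M : ℕ) {δ : ℝ} (hδ : 0 < δ) :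
    ∃ ε > 0, ∀ (y : ℕ → ℕ → ℝ) (Y : ℝ), (∀ m ∈ Icc 1 (M + 1), |y (M + 1) m| ≤ Y) →
      ∀ n ∈ Icc 1 M, ∀ j ∈ Icc 1 n, δ / 2 * |y n j| - δ * Y ≤ decayRate δ ε M y := by
  set R : ℝ := ∑ n ∈ Icc 1 M, (n * (n + 1) * 2 + n * n * 2 : ℝ)
  have denom_pos : 0 < 2 * (R + 1) := by positivity
  refine ⟨δ / (2 * (R + 1)), div_pos hδ denom_pos, fun y Y hY n hn j hj => ?_⟩
  set ε : ℝ := δ / (2 * (R + 1))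
  set T : ℝ := ∑ i ∈ Icc 1 M, levelEnergy y i
  have entry_le : |y n j| ≤ Y + T :=
    abs_le_add_sum_levelEnergy hY (by have := mem_Icc.1 hn; omega) hj
  have perturbation_le : ε * R ≤ δ / 2 := by
    rw [div_mul_eq_mul_div, div_le_div_iff₀ denom_pos two_pos]
    nlinarith
  calc δ / 2 * |y n j| - δ * Y ≤ δ / 2 * (Y + T) - δ * Y := by gcongr
    _ = δ * T - δ / 2 * (Y + T) := by ring
    _ ≤ δ * T - ε * R * (Y + T) := by
        have := (abs_nonneg _).trans entry_le
        gcongr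
    _ ≤ δ * ∑ n ∈ Icc 1 M, (crossDist y n - selfDist y n) -
          ε * ∑ n ∈ Icc 1 M, (crossDist y n + selfDist y n) := by
        rw [mul_assoc]
        gcongr
        · exact sum_levelEnergy_le y M
        · exact sum_crossDist_add_selfDist_le hY
    _ = decayRate δ ε M y := by
        rw [decayRate, mul_sum, mul_sum, ← sum_sub_distrib]
        exact sum_congr rfl fun n _ => by ring

end TriangularArray

/-! ### Integrability of the Mellin–Barnes integrand -/

lemma integrable_exp_neg_mul_abs {c : ℝ} (hc : 0 < c) :
    Integrable fun t : ℝ => Real.exp (-c * |t|) := by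
  have on_Ioi : IntegrableOn (fun t : ℝ => Real.exp (-c * |t|)) (Set.Ioi 0) :=
    (integrableOn_exp_mul_Ioi (neg_neg_of_pos hc) 0).congr_fun
      (fun t ht => by simp only [abs_of_pos (Set.mem_Ioi.1 ht)]) measurableSet_Ioi
  have on_Iic : IntegrableOn (fun t : ℝ => Real.exp (-c * |t|)) (Set.Iic 0) :=
    (integrableOn_exp_mul_Iic hc 0).congr_fun
      (fun t ht => by simp only [abs_of_nonpos (Set.mem_Iic.1 ht), neg_mul_neg]) measurableSet_Iic
  rw [← integrableOn_univ, ← Set.Iic_union_Ioi (a := (0 : ℝ))]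
  exact on_Iic.union on_Ioi

lemma integrable_exp_neg_mul_norm {ι : Type*} [Fintype ι] {c : ℝ} (hc : 0 < c) :
    Integrable fun ξ : ι → ℝ => Real.exp (-c * ‖ξ‖) := by
  set C : ℝ := Fintype.card ι + 1
  have C_pos : 0 < C := by positivity
  have product_integrable : Integrable fun ξ : ι → ℝ => ∏ i, Real.exp (-(c / C) * |ξ i|) :=
    Integrable.fintype_prod fun _ => integrable_exp_neg_mul_abs (div_pos hc C_pos)
  refine product_integrable.mono' (by fun_prop) (.of_forall fun ξ => ?_)
  have sum_le : ∑ i, |ξ i| ≤ C * ‖ξ‖ :=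
    calc ∑ i, |ξ i| ≤ ∑ _i : ι, ‖ξ‖ := sum_le_sum fun i _ => norm_le_pi_norm ξ i
      _ = Fintype.card ι * ‖ξ‖ := by simp
      _ ≤ C * ‖ξ‖ := by gcongr; exact le_add_of_nonneg_right zero_le_one
  rw [Real.norm_of_nonneg (Real.exp_pos _).le, ← Real.exp_sum, ← mul_sum, Real.exp_le_exp,
    neg_mul, neg_mul, neg_le_neg_iff, div_mul_eq_mul_div, div_le_iff₀ C_pos, mul_assoc,
    mul_comm ‖ξ‖]
  gcongr

section TodaIntegrand

variable {α : Type*}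

lemma div_I_mul_ofReal (u : ℂ) (ℏ : ℝ) :
    u / (Complex.I * ℏ) = (u.im / ℏ : ℝ) + (-(u.re / ℏ) : ℝ) * Complex.I := by
  rw [div_mul_eq_div_div, Complex.div_I]
  apply Complex.ext <;> simp [Complex.div_ofReal_re, Complex.div_ofReal_im, neg_div]

lemma isBigO_one_of_norm_eq {f : α → ℂ} {C : ℝ} (hf : ∀ a, ‖f a‖ = C) :
    f =O[⊤] fun _ => (1 : ℝ) :=
  isBigO_top.2 ⟨C, fun a => by simp [hf]⟩

lemma norm_hpow (ℏ : ℝ) (z : ℂ) : ‖hpow ℏ z‖ = Real.exp (z.re * Real.log ℏ) := by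
  rw [hpow, Complex.norm_exp, Complex.re_mul_ofReal]

section Factors

variable {u : α → ℂ} {b ℏ ε : ℝ}

lemma hpow_div_I_mul_isBigO_one (ℏ : ℝ) (hu : ∀ a, (u a).im = b) :
    (fun a => hpow ℏ (u a / (Complex.I * ℏ))) =O[⊤] fun _ => (1 : ℝ) := by
  refine isBigO_one_of_norm_eq (C := Real.exp (b / ℏ * Real.log ℏ)) fun a => ?_
  simp [norm_hpow, div_I_mul_ofReal, hu]

lemma Gamma_div_I_mul_isBigO (hℏ : 0 < ℏ) (hε : 0 < ε) (hb : 0 < b) (hu : ∀ a, (u a).im = b) :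
    (fun a => Complex.Gamma (u a / (Complex.I * ℏ))) =O[⊤]
      fun a => Real.exp (-((π / 2 / ℏ - ε) * |(u a).re|)) := by
  refine ((Gamma_vertical_isBigO (div_pos hb hℏ) (mul_pos hℏ hε)).comp_tendsto
    (tendsto_top (f := fun a => -((u a).re / ℏ)))).congr (fun a => ?_) fun a => ?_
  · rw [div_I_mul_ofReal, hu, Function.comp_apply]
  · rw [Function.comp_apply, abs_neg, abs_div, abs_of_pos hℏ]
    congr 1
    field_simp
    ring

lemma inv_Gamma_div_I_mul_isBigO (hℏ : 0 < ℏ) (hε : 0 < ε) (hu : ∀ a, (u a).im = b) :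
    (fun a => (Complex.Gamma (u a / (Complex.I * ℏ)))⁻¹) =O[⊤]
      fun a => Real.exp ((π / 2 / ℏ + ε) * |(u a).re|) := by
  refine ((inv_Gamma_vertical_isBigO (b / ℏ) (mul_pos hℏ hε)).comp_tendsto
    (tendsto_top (f := fun a => -((u a).re / ℏ)))).congr (fun a => ?_) fun a => ?_
  · rw [div_I_mul_ofReal, hu, Function.comp_apply]
  · rw [Function.comp_apply, abs_neg, abs_div, abs_of_pos hℏ]
    congr 1
    field_simp

end Factors

lemma prod_isBigO_exp_sum {ι : Type*} (s : Finset ι) {f : ι → α → ℂ} {g : ι → α → ℝ}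
    (h : ∀ i ∈ s, f i =O[⊤] fun a => Real.exp (g i a)) :
    (fun a => ∏ i ∈ s, f i a) =O[⊤] fun a => Real.exp (∑ i ∈ s, g i a) := by
  simpa only [Real.exp_sum] using IsBigO.finsetProd h

variable {γ : α → GZ} {η : ℕ → ℕ → ℝ} {ℏ ε : ℝ} {N n : ℕ}

lemma prod_hpow_mul_Gamma_isBigO (hℏ : 0 < ℏ) (hε : 0 < ε)
    (hlevel : ∀ a, ∀ k ∈ Icc 1 n, (γ a n k).im = η n k)
    (hnext : ∀ a, ∀ m ∈ Icc 1 (n + 1), (γ a (n + 1) m).im = η (n + 1) m)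
    (hη : ∀ k ∈ Icc 1 n, ∀ m ∈ Icc 1 (n + 1), η (n + 1) m < η n k) :
    (fun a => ∏ k ∈ Icc 1 n, ∏ m ∈ Icc 1 (n + 1),
      hpow ℏ ((γ a n k - γ a (n + 1) m) / (Complex.I * ℏ)) *
        Complex.Gamma ((γ a n k - γ a (n + 1) m) / (Complex.I * ℏ))) =O[⊤]
      fun a => Real.exp (-((π / 2 / ℏ - ε) * crossDist (fun n j => (γ a n j).re) n)) := by
  simp only [crossDist, sumDist, mul_sum, ← sum_neg_distrib]
  refine prod_isBigO_exp_sum _ fun k hk => prod_isBigO_exp_sum _ fun m hm => ?_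
  have im_sub : ∀ a, (γ a n k - γ a (n + 1) m).im = η n k - η (n + 1) m := fun a => by
    rw [Complex.sub_im, hlevel a k hk, hnext a m hm]
  simpa only [one_mul, Complex.sub_re] using (hpow_div_I_mul_isBigO_one ℏ im_sub).mul
    (Gamma_div_I_mul_isBigO hℏ hε (sub_pos.2 (hη k hk m hm)) im_sub)

lemma inv_prod_Gamma_isBigO (hℏ : 0 < ℏ) (hε : 0 < ε)
    (hlevel : ∀ a, ∀ k ∈ Icc 1 n, (γ a n k).im = η n k) :
    (fun a => (∏ s ∈ Icc 1 n, ∏ p ∈ (Icc 1 n).erase s,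
      Complex.Gamma ((γ a n s - γ a n p) / (Complex.I * ℏ)))⁻¹) =O[⊤]
      fun a => Real.exp ((π / 2 / ℏ + ε) * selfDist (fun n j => (γ a n j).re) n) := by
  have drop_diagonal : ∀ a, ∀ s ∈ Icc 1 n, ∑ p ∈ Icc 1 n, |(γ a n s).re - (γ a n p).re| =
      ∑ p ∈ (Icc 1 n).erase s, |(γ a n s).re - (γ a n p).re| := fun a s _ =>
    (sum_erase _ (by simp)).symm
  simp only [selfDist, sumDist, ← prod_inv_distrib, sum_congr rfl (drop_diagonal _), mul_sum]
  refine prod_isBigO_exp_sum _ fun s hs => prod_isBigO_exp_sum _ fun p hp => ?_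
  have im_sub : ∀ a, (γ a n s - γ a n p).im = η n s - η n p := fun a => by
    rw [Complex.sub_im, hlevel a s hs, hlevel a p (mem_of_mem_erase hp)]
  simpa only [Complex.sub_re] using inv_Gamma_div_I_mul_isBigO hℏ hε im_sub

lemma exp_sum_mul_isBigO_one (ℏ : ℝ) (x : ℕ → ℝ)
    (him : ∀ a, ∀ n ≤ N, ∀ j ∈ Icc 1 n, (γ a n j).im = η n j) :
    (fun a => Complex.exp ((Complex.I / (ℏ : ℂ)) * ∑ n ∈ Icc 1 N,
      ((∑ j ∈ Icc 1 n, γ a n j) - ∑ j ∈ Icc 1 (n - 1), γ a (n - 1) j) * (x n : ℂ))) =O[⊤]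
      fun _ => (1 : ℝ) := by
  have re_I_div_mul : ∀ z : ℂ, ((Complex.I / (ℏ : ℂ)) * z).re = -z.im / ℏ := fun z => by
    rw [div_mul_eq_mul_div, Complex.div_ofReal_re, Complex.I_mul_re]
  refine isBigO_one_of_norm_eq (C := Real.exp (-(∑ n ∈ Icc 1 N,
    ((∑ j ∈ Icc 1 n, η n j) - ∑ j ∈ Icc 1 (n - 1), η (n - 1) j) * x n) / ℏ)) fun a => ?_
  rw [Complex.norm_exp, re_I_div_mul, Complex.im_sum]
  congr 3
  refine sum_congr rfl fun n hn => ?_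
  have hnN := (mem_Icc.1 hn).2
  rw [Complex.im_mul_ofReal, Complex.sub_im, Complex.im_sum, Complex.im_sum,
    sum_congr rfl (him a n hnN), sum_congr rfl (him a (n - 1) (by omega))]

theorem todaIntegrand_isBigO (hℏ : 0 < ℏ) (hε : 0 < ε) (x : ℕ → ℝ)
    (him : ∀ a, ∀ n ≤ N, ∀ j ∈ Icc 1 n, (γ a n j).im = η n j)
    (hη : ∀ n : ℕ, 1 ≤ n → n ≤ N - 1 → ∀ j ∈ Icc 1 n, ∀ m ∈ Icc 1 (n + 1),
      η (n + 1) m < η n j) :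
    (fun a => todaIntegrand ℏ N x (γ a)) =O[⊤]
      fun a => Real.exp (-decayRate (π / 2 / ℏ) ε (N - 1) fun n j => (γ a n j).re) := by
  simp only [todaIntegrand, decayRate, ← sum_neg_distrib, neg_sub', sub_neg_eq_add,
    div_eq_mul_inv (∏ _ ∈ Icc 1 _, _)]
  refine ((prod_isBigO_exp_sum _ fun n hn => ?_).mul (exp_sum_mul_isBigO_one ℏ x him)).congr_right
    fun a => mul_one _
  obtain ⟨hn1, hnN⟩ := mem_Icc.1 hn
  simp only [Real.exp_add]
  exact (prod_hpow_mul_Gamma_isBigO hℏ hε (fun a => him a n (by omega))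
    (fun a => him a (n + 1) (by omega)) (hη n hn1 hnN)).mul
    (inv_prod_Gamma_isBigO hℏ hε fun a => him a n (by omega))

lemma measurable_todaIntegrand [MeasurableSpace α] (ℏ : ℝ) (N : ℕ) (x : ℕ → ℝ)
    (hγ : ∀ n j, Measurable fun a => γ a n j) :
    Measurable fun a => todaIntegrand ℏ N x (γ a) := by
  have := measurable_Gamma
  unfold todaIntegrand hpow
  fun_prop

end TodaIntegrand

section Tube

variable {N : ℕ} {g : ℕ → ℂ} {η : ℕ → ℕ → ℝ}

lemma measurable_gzTube (n j : ℕ) : Measurable fun ξ => gzTube N g η ξ n j := by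
  unfold gzTube
  split_ifs <;> fun_prop

lemma gzTube_top (ξ : GZIdx N → ℝ) (j : ℕ) : gzTube N g η ξ N j = g j := by
  simp [gzTube]

lemma gzTube_re (ξ : GZIdx N → ℝ) (i : GZIdx N) :
    (gzTube N g η ξ i.1.1 i.1.2).re = ξ i := by
  simp [gzTube, i.2]

lemma gzTube_im (htop : ∀ k, η N k = (g k).im) (ξ : GZIdx N → ℝ) (n : ℕ) (hn : n ≤ N)
    (j : ℕ) (hj : j ∈ Icc 1 n) : (gzTube N g η ξ n j).im = η n j := by
  obtain ⟨hj1, hjn⟩ := mem_Icc.1 hj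
  rcases hn.lt_or_eq with hn | rfl
  · simp [gzTube, hj1, hjn, hn]
  · rw [gzTube_top, htop]

lemma exists_exp_neg_decayRate_gzTube_isBigO (hN : 2 ≤ N) {δ : ℝ} (hδ : 0 < δ) :
    ∃ ε > 0, (fun ξ : GZIdx N → ℝ =>
      Real.exp (-decayRate δ ε (N - 1) fun n j => (gzTube N g η ξ n j).re)) =O[⊤]
        fun ξ => Real.exp (-(δ / 2) * ‖ξ‖) := by
  obtain ⟨ε, hε, coercive⟩ := exists_le_decayRate (N - 1) hδ
  rw [Nat.sub_add_cancel (by omega)] at coercive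
  set Y : ℝ := ∑ m ∈ Icc 1 N, |(g m).re|
  refine ⟨ε, hε, isBigO_exp_of_le_add (δ * Y) fun ξ => ?_⟩
  set y : ℕ → ℕ → ℝ := fun n j => (gzTube N g η ξ n j).re
  have top_row_le : ∀ m ∈ Icc 1 N, |y N m| ≤ Y := fun m hm => by
    simpa only [y, gzTube_top] using
      single_le_sum (f := fun m => |(g m).re|) (fun _ _ => abs_nonneg _) hm
  have coord_le : ∀ i, ‖ξ i‖ ≤ (decayRate δ ε (N - 1) y + δ * Y) / (δ / 2) := fun i => by
    have h := coercive y Y top_row_le i.1.1 (mem_Icc.2 (by omega)) i.1.2 (mem_Icc.2 i.2)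
    rw [show y i.1.1 i.1.2 = ξ i from gzTube_re ξ i] at h
    rw [le_div_iff₀ (half_pos hδ), Real.norm_eq_abs]
    linarith
  have : Nonempty (GZIdx N) := ⟨⟨(⟨1, by omega⟩, ⟨1, by omega⟩), le_rfl, le_rfl⟩⟩
  have norm_le := (pi_norm_le_iff_of_nonempty ξ).2 coord_le
  rw [le_div_iff₀ (half_pos hδ)] at norm_le
  linarith

end Tube

/-- absolute convergence of the Mellin–Barnes integral representation
of the `GL(N,ℝ)` open Toda chain wave function, on any tube with
`min_j η_{nj} > max_m η_{n+1,m}` between consecutive levels. -/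
theorem toda_integrand_integrable (ℏ : ℝ) (hℏ : 0 < ℏ) (N : ℕ) (hN : 2 ≤ N)
    (γtop : ℕ → ℂ) (η : ℕ → ℕ → ℝ)
    (hηtop : ∀ k, η N k = (γtop k).im)
    (hη : ∀ n : ℕ, 1 ≤ n → n ≤ N - 1 → ∀ j ∈ Icc 1 n, ∀ m ∈ Icc 1 (n + 1),
      η (n + 1) m < η n j)
    (x : ℕ → ℝ) :
    Integrable (fun ξ : GZIdx N → ℝ => todaIntegrand ℏ N x (gzTube N γtop η ξ)) := by
  obtain ⟨ε, hε, decay⟩ := exists_exp_neg_decayRate_gzTube_isBigO (g := γtop) (η := η) hN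
    (δ := π / 2 / ℏ) (by positivity)
  have integrand_isBigO := todaIntegrand_isBigO hℏ hε x (gzTube_im hηtop) hη
  exact (integrand_isBigO.trans decay).integrable
    (measurable_todaIntegrand ℏ N x measurable_gzTube).aestronglyMeasurable
    (integrable_exp_neg_mul_norm (by positivity))
end
end
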